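/- Let d ≥ 1, let γ_d be the standard Gaussian measure on ℝ^d, and let k(x,y) = E_Z[relu(⟨x,Z⟩)·relu(⟨y,Z⟩)] with Z ∼ γ_d. Then there exists a constant λ > 0 such that for every x ∈ ℝ^d, ∫ k(x,y)·|y| dγ_d(y) = λ·|x|. That is, the norm function x ↦ |x| is an eigenfunction of the integral operator f ↦ ∫ k(·,y)f(y)dγ_d(y). -/

import Mathlib

open MeasureTheory Real

/-- The standard Gaussian measure on `ℝ^d`. -/
noncomputable def stdGaussian (d : ℕ) : Measure (Fin d → ℝ) :=
  Measure.pi fun _ => ProbabilityTheory.gaussianReal 0 1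

/-- ReLU activation. -/
def relu (t : ℝ) : ℝ := max t 0

/-- Euclidean inner product on `ℝ^d`. -/
noncomputable def dot {d : ℕ} (x y : Fin d → ℝ) : ℝ := ∑ i, x i * y i

/-- Euclidean norm on `ℝ^d`. -/
noncomputable def vnorm {d : ℕ} (x : Fin d → ℝ) : ℝ := Real.sqrt (∑ i, x i ^ 2)

/-- The neural tangent kernel `k(x,y) = E_Z[relu(⟨x,Z⟩) relu(⟨y,Z⟩)]`. -/
noncomputable def ntk (d : ℕ) (x y : Fin d → ℝ) : ℝ :=
  ∫ z, relu (dot x z) * relu (dot y z) ∂ stdGaussian d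

/-- The `n`-th term of the series part of the NTK expansion. -/
noncomputable def ntkTerm {d : ℕ} (x y : Fin d → ℝ) (n : ℕ) : ℝ :=
  (Nat.choose (2 * n) n : ℝ) * dot x y ^ (2 * n + 2) /
    (2 ^ (2 * n) * (2 * n + 1) * (2 * n + 2) * (vnorm x * vnorm y) ^ (2 * n + 1))

open ProbabilityTheory in
instance gaussOpenPos : (gaussianReal 0 1).IsOpenPosMeasure :=
  (gaussianReal_absolutelyContinuous' 0 one_ne_zero).isOpenPosMeasure

abbrev EE (d : ℕ) := EuclideanSpace ℝ (Fin d)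

noncomputable abbrev GG (d : ℕ) : Measure (EE d) := ProbabilityTheory.stdGaussian (EE d)

instance GGOpenPos (d : ℕ) : (GG d).IsOpenPosMeasure := by
  rw [GG, ← ProbabilityTheory.map_pi_eq_stdGaussian]
  exact (PiLp.continuous_toLp 2 _).isOpenPosMeasure_map (WithLp.toLp_surjective 2)

noncomputable def KK {d : ℕ} (x y : EE d) : ℝ :=
  ∫ z, relu (inner ℝ x z) * relu (inner ℝ y z) ∂ GG d

noncomputable def FF {d : ℕ} (x : EE d) : ℝ := ∫ y, KK x y * ‖y‖ ∂ GG d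

lemma relu_cont : Continuous relu := by unfold relu; fun_prop

lemma relu_nonneg (t : ℝ) : 0 ≤ relu t := le_max_right _ _

lemma relu_pos {t : ℝ} (h : 0 < t) : 0 < relu t := lt_max_of_lt_left h

lemma relu_le (t : ℝ) : relu t ≤ |t| := max_le (le_abs_self t) (abs_nonneg t)

lemma relu_mul {c : ℝ} (hc : 0 ≤ c) (t : ℝ) : relu (c * t) = c * relu t := by
  unfold relu
  rw [mul_max_of_nonneg _ _ hc, mul_zero]

lemma dot_eq {d : ℕ} (x y : Fin d → ℝ) :
    dot x y = inner ℝ (WithLp.toLp 2 x : EE d) (WithLp.toLp 2 y) := by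
  simp [dot, PiLp.inner_apply, mul_comm]

lemma vnorm_eq {d : ℕ} (x : Fin d → ℝ) : vnorm x = ‖(WithLp.toLp 2 x : EE d)‖ := by
  simp [vnorm, EuclideanSpace.norm_eq]

lemma integral_GG {d : ℕ} (f : EE d → ℝ) :
    ∫ y, f y ∂ GG d = ∫ y, f (WithLp.toLp 2 y) ∂ stdGaussian d := by
  rw [GG, ← ProbabilityTheory.map_pi_eq_stdGaussian]
  exact (MeasurableEquiv.toLp 2 (Fin d → ℝ)).measurableEmbedding.integral_map f

lemma FF_eq {d : ℕ} (x : Fin d → ℝ) :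
    ∫ y, ntk d x y * vnorm y ∂ stdGaussian d = FF (WithLp.toLp 2 x) := by
  simp only [FF, KK, integral_GG, ntk, dot_eq, vnorm_eq]

lemma integral_isom {d : ℕ} (R : EE d ≃ₗᵢ[ℝ] EE d) (f : EE d → ℝ) :
    ∫ y, f (R y) ∂ GG d = ∫ y, f y ∂ GG d := by
  conv_rhs => rw [GG, ← ProbabilityTheory.stdGaussian_map R]
  exact (R.toHomeomorph.measurableEmbedding.integral_map f).symm

lemma KK_isom {d : ℕ} (R : EE d ≃ₗᵢ[ℝ] EE d) (x y : EE d) : KK (R x) (R y) = KK x y := by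
  unfold KK
  rw [← integral_isom R]
  simp

lemma FF_isom {d : ℕ} (R : EE d ≃ₗᵢ[ℝ] EE d) (x : EE d) : FF (R x) = FF x := by
  unfold FF
  rw [← integral_isom R]
  simp [KK_isom]

lemma FF_smul {d : ℕ} {c : ℝ} (hc : 0 ≤ c) (x : EE d) : FF (c • x) = c * FF x := by
  simp only [FF, KK, inner_smul_left, RCLike.conj_to_real, relu_mul hc, mul_assoc,
    integral_const_mul]

lemma FF_norm {d : ℕ} {e : EE d} (he : ‖e‖ = 1) (x : EE d) : FF x = FF e * ‖x‖ := by
  have h : ‖‖x‖ • e‖ = ‖x‖ := by simp [norm_smul, he]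
  rw [mul_comm, ← FF_smul (norm_nonneg x), ← FF_isom _ (‖x‖ • e), Submodule.reflection_sub h]

lemma sq_int (d : ℕ) : Integrable (fun z : EE d => ‖z‖ ^ 2) (GG d) :=
  (ProbabilityTheory.IsGaussian.memLp_id (GG d) 2 (by simp)).integrable_norm_pow (by simp)

lemma bnd {d : ℕ} (x y z : EE d) :
    relu (inner ℝ x z) * relu (inner ℝ y z) ≤ ‖x‖ * ‖y‖ * ‖z‖ ^ 2 := by
  have h1 := (relu_le _).trans (abs_real_inner_le_norm x z)
  have h2 := (relu_le _).trans (abs_real_inner_le_norm y z)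
  calc _ ≤ (‖x‖ * ‖z‖) * (‖y‖ * ‖z‖) := mul_le_mul h1 h2 (relu_nonneg _) (by positivity)
    _ = _ := by ring

lemma KK_int {d : ℕ} (x y : EE d) :
    Integrable (fun z => relu (inner ℝ x z) * relu (inner ℝ y z)) (GG d) := by
  have := relu_cont
  refine ((sq_int d).const_mul (‖x‖ * ‖y‖)).mono'
    (Continuous.aestronglyMeasurable (by fun_prop)) (ae_of_all _ fun z => ?_)
  rw [Real.norm_of_nonneg (mul_nonneg (relu_nonneg _) (relu_nonneg _))]
  exact bnd x y z

lemma KK_nonneg {d : ℕ} (x y : EE d) : 0 ≤ KK x y :=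
  integral_nonneg fun _ => mul_nonneg (relu_nonneg _) (relu_nonneg _)

lemma KK_le {d : ℕ} (x y : EE d) : KK x y ≤ ‖x‖ * ‖y‖ * ∫ z, ‖z‖ ^ 2 ∂ GG d := by
  rw [← integral_const_mul]
  exact integral_mono (KK_int x y) ((sq_int d).const_mul _) (bnd x y)

lemma KK_meas {d : ℕ} (x : EE d) : StronglyMeasurable (fun y => KK x y) := by
  have := relu_cont
  refine StronglyMeasurable.integral_prod_right
    (f := fun y z => relu (inner ℝ x z) * relu (inner ℝ y z)) ?_
  apply Continuous.stronglyMeasurable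
  unfold Function.uncurry
  fun_prop

lemma KK_pos {d : ℕ} {x y : EE d} (h : 0 < inner ℝ x y) : 0 < KK x y := by
  rw [KK, integral_pos_iff_support_of_nonneg
    (fun _ => mul_nonneg (relu_nonneg _) (relu_nonneg _)) (KK_int x y)]
  have ho : IsOpen {z : EE d | 0 < inner ℝ x z ∧ 0 < inner ℝ y z} :=
    IsOpen.and (isOpen_lt (by fun_prop) (by fun_prop)) (isOpen_lt (by fun_prop) (by fun_prop))
  have hy : y ≠ 0 := by rintro rfl; simp at h
  refine (ho.measure_pos (GG d) ⟨y, h, ?_⟩).trans_le (measure_mono ?_)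
  · exact real_inner_self_pos.2 hy
  · intro z hz
    exact (mul_pos (relu_pos hz.1) (relu_pos hz.2)).ne'

lemma FF_pos {d : ℕ} {x : EE d} (h : x ≠ 0) : 0 < FF x := by
  have hi : Integrable (fun y => KK x y * ‖y‖) (GG d) := by
    refine ((sq_int d).const_mul (‖x‖ * ∫ z, ‖z‖ ^ 2 ∂ GG d)).mono'
      ((KK_meas x).mul continuous_norm.stronglyMeasurable).aestronglyMeasurable
      (ae_of_all _ fun y => ?_)
    rw [Real.norm_of_nonneg (mul_nonneg (KK_nonneg _ _) (norm_nonneg _))]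
    calc _ ≤ (‖x‖ * ‖y‖ * ∫ z, ‖z‖ ^ 2 ∂ GG d) * ‖y‖ :=
          mul_le_mul_of_nonneg_right (KK_le x y) (norm_nonneg _)
      _ = _ := by ring
  rw [FF, integral_pos_iff_support_of_nonneg
    (fun _ => mul_nonneg (KK_nonneg _ _) (norm_nonneg _)) hi]
  have ho : IsOpen {z : EE d | 0 < inner ℝ x z} := isOpen_lt (by fun_prop) (by fun_prop)
  refine (ho.measure_pos (GG d) ⟨x, real_inner_self_pos.2 h⟩).trans_le (measure_mono ?_)
  intro y hy
  have hy0 : y ≠ 0 := by rintro rfl; simp at hy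
  exact (mul_pos (KK_pos hy) (norm_pos_iff.2 hy0)).ne'

theorem norm_eigenfunction (d : ℕ) (hd : 1 ≤ d) :
    ∃ lam : ℝ, 0 < lam ∧
      ∀ x : Fin d → ℝ, ∫ y, ntk d x y * vnorm y ∂ stdGaussian d = lam * vnorm x := by
  have he : ‖(EuclideanSpace.single (⟨0, hd⟩ : Fin d) (1 : ℝ) : EE d)‖ = 1 := by simp
  refine ⟨FF (EuclideanSpace.single (⟨0, hd⟩ : Fin d) (1 : ℝ)), FF_pos ?_, fun x => ?_⟩
  · intro h; simp [h] at he
  · rw [FF_eq, vnorm_eq, FF_norm he]
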